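/- arXiv:2305.00851 — 4 statements merged into one kernel-verified Lean document; each statement's English description precedes it below -/
import Mathlib

section
/- Theorem 2 (no robustness-accuracy tradeoff, discrete form): fix λ ≥ 0, λ₁ ≥ 0, λ₂ ≥ 0 and let g : G → Bool be a Bayes classifier for p that is strict on the support (for every x with μ x > 0, p(x, g x) > p(x, ¬(g x))). Define the robust loss L_rob(f,g) = λ₁·L_adv(f,g) + λ₂·L_over(f,g) and the combined objective J(f) = Risk(f) + λ·L_rob(f,g). Then any f : G → Bool minimizing J over all classifiers G → Bool is Bayes optimal, i.e., Risk(f) = Risk(g). -/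
/-- 0/1-loss. -/
def l01 {Y : Type*} [DecidableEq Y] (y y' : Y) : ℤ := if y = y' then 0 else 1

/-- Expected adversarial 0/1-loss. -/
def Ladv {G Y : Type*} [Fintype G] [DecidableEq Y]
    (μ : G → ℝ) (B : G → Finset G) (hB : ∀ x, x ∈ B x)
    (f g : G → Y) : ℝ :=
  ∑ x, μ x *
    ((((B x).filter (fun xt => g xt = g x)).sup'
        ⟨x, Finset.mem_filter.mpr ⟨hB x, rfl⟩⟩
        (fun xt => l01 (f xt) (g x) - l01 (f x) (g x)) : ℤ) : ℝ)

/-- Expected over-robust 0/1-loss. -/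
def Lover {G Y : Type*} [Fintype G] [DecidableEq Y]
    (μ : G → ℝ) (B : G → Finset G) (hB : ∀ x, x ∈ B x)
    (f g : G → Y) : ℝ :=
  ∑ x, μ x *
    ((((B x).filter (fun xt => f xt = f x)).sup'
        ⟨x, Finset.mem_filter.mpr ⟨hB x, rfl⟩⟩
        (fun xt => l01 (g xt) (f x) - l01 (g x) (f x)) : ℤ) : ℝ)
/-- Expected 0/1-loss (risk) of a binary node classifier. -/
def Risk {G : Type*} [Fintype G] (p : G × Bool → ℝ) (f : G → Bool) : ℝ :=
  ∑ xc : G × Bool, p xc * (if f xc.1 = xc.2 then 0 else 1)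

/-- Marginal distribution over graphs. -/
def marg {G : Type*} (p : G × Bool → ℝ) (x : G) : ℝ := p (x, false) + p (x, true)

/-- Theorem 2 (no robustness-accuracy tradeoff, discrete form): any minimizer
of the combined standard-plus-robust objective is Bayes optimal. -/
theorem no_robustness_accuracy_tradeoff
    {G : Type*} [Fintype G]
    (p : G × Bool → ℝ) (hp : ∀ xc, 0 ≤ p xc)
    (hsum : ∑ xc : G × Bool, p xc = 1)
    (B : G → Finset G) (hB : ∀ x, x ∈ B x)
    (lam lam1 lam2 : ℝ) (hlam : 0 ≤ lam) (hlam1 : 0 ≤ lam1) (hlam2 : 0 ≤ lam2)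
    (g : G → Bool)
    (hg : ∀ x : G, 0 < marg p x → p (x, !(g x)) < p (x, g x))
    (f : G → Bool)
    (hmin : ∀ f' : G → Bool,
      Risk p f + lam * (lam1 * Ladv (marg p) B hB f g + lam2 * Lover (marg p) B hB f g)
        ≤ Risk p f' + lam * (lam1 * Ladv (marg p) B hB f' g + lam2 * Lover (marg p) B hB f' g)) :
    Risk p f = Risk p g := by
  have hm : ∀ x, 0 ≤ marg p x := fun x => add_nonneg (hp _) (hp _)
  have ha : 0 ≤ Ladv (marg p) B hB f g := by
    unfold Ladv
    refine Finset.sum_nonneg fun x _ => mul_nonneg (hm x) (Int.cast_nonneg ?_)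
    refine (Finset.le_sup'_iff _).mpr ⟨x, Finset.mem_filter.mpr ⟨hB x, rfl⟩, by simp⟩
  have ho : 0 ≤ Lover (marg p) B hB f g := by
    unfold Lover
    refine Finset.sum_nonneg fun x _ => mul_nonneg (hm x) (Int.cast_nonneg ?_)
    refine (Finset.le_sup'_iff _).mpr ⟨x, Finset.mem_filter.mpr ⟨hB x, rfl⟩, by simp⟩
  have ha' : Ladv (marg p) B hB g g ≤ 0 := by
    unfold Ladv
    refine Finset.sum_nonpos fun x _ =>
      mul_nonpos_of_nonneg_of_nonpos (hm x) (Int.cast_nonpos.mpr ?_)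
    refine Finset.sup'_le _ _ fun y hy => ?_
    simp [l01, (Finset.mem_filter.mp hy).2]
  have ho' : Lover (marg p) B hB g g ≤ 0 := ha'
  apply le_antisymm
  · have h := hmin g
    have h1 : 0 ≤ lam * (lam1 * Ladv (marg p) B hB f g + lam2 * Lover (marg p) B hB f g) := by
      positivity
    have h2 : lam * (lam1 * Ladv (marg p) B hB g g + lam2 * Lover (marg p) B hB g g) ≤ 0 :=
      mul_nonpos_of_nonneg_of_nonpos hlam
        (add_nonpos (mul_nonpos_of_nonneg_of_nonpos hlam1 ha')
          (mul_nonpos_of_nonneg_of_nonpos hlam2 ho'))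
    linarith
  · unfold Risk
    rw [Fintype.sum_prod_type, Fintype.sum_prod_type]
    refine Finset.sum_le_sum fun x _ => ?_
    have h0 := hp (x, false)
    have h1 := hp (x, true)
    have hgx := hg x
    unfold marg at hgx
    rcases eq_or_lt_of_le (add_nonneg h0 h1) with h | h
    · have e0 : p (x, false) = 0 := by linarith
      have e1 : p (x, true) = 0 := by linarith
      simp [e0, e1]
    · have h2 := hgx h
      cases hG : g x <;> cases hF : f x <;> simp [hG] at h2 <;> simp [hG, hF] <;> linarith
end

section
/- Theorem 3 (minimizing only the robust loss does not imply good generalization, discrete form): fix λ₁ ≥ 0, λ₂ ≥ 0, let g : G → Bool be a Bayes classifier for p that is strict on the support (for every x with μ x > 0, p(x, g x) > p(x, ¬(g x))), and assume the support is nonempty (there exists x with μ x > 0). Then the classifier f defined by f x = ¬(g x) minimizes the robust loss L_rob(·, g) = λ₁·L_adv(·,g) + λ₂·L_over(·,g) over all classifiers G → Bool (in fact L_rob(f,g) = 0), yet Risk(f) > Risk(g). -/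
/-- Theorem 3 (minimizing only the robust loss does not imply good
generalization): the classifier flipping the Bayes classifier everywhere
minimizes the robust loss (which is zero), yet has strictly larger risk. -/
theorem robust_minimizer_not_bayes
    {G : Type*} [Fintype G]
    (p : G × Bool → ℝ) (hp : ∀ xc, 0 ≤ p xc)
    (hsum : ∑ xc : G × Bool, p xc = 1)
    (B : G → Finset G) (hB : ∀ x, x ∈ B x)
    (lam1 lam2 : ℝ) (hlam1 : 0 ≤ lam1) (hlam2 : 0 ≤ lam2)
    (g : G → Bool)
    (hg : ∀ x : G, 0 < marg p x → p (x, !(g x)) < p (x, g x))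
    (hne : ∃ x : G, 0 < marg p x) :
    (lam1 * Ladv (marg p) B hB (fun x => !(g x)) g
        + lam2 * Lover (marg p) B hB (fun x => !(g x)) g = 0) ∧
    (∀ f' : G → Bool,
      lam1 * Ladv (marg p) B hB (fun x => !(g x)) g
          + lam2 * Lover (marg p) B hB (fun x => !(g x)) g
        ≤ lam1 * Ladv (marg p) B hB f' g + lam2 * Lover (marg p) B hB f' g) ∧
    Risk p g < Risk p (fun x => !(g x)) := by
  have hm : ∀ x, 0 ≤ marg p x := fun x => add_nonneg (hp _) (hp _)
  have hA : ∀ f h : G → Bool, 0 ≤ Ladv (marg p) B hB f h := by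
    intro f h
    unfold Ladv
    refine Finset.sum_nonneg fun x _ => mul_nonneg (hm x) ?_
    rw [Int.cast_nonneg_iff]
    have hx : x ∈ (B x).filter (fun xt => h xt = h x) :=
      Finset.mem_filter.mpr ⟨hB x, rfl⟩
    have := Finset.le_sup' (fun xt => l01 (f xt) (h x) - l01 (f x) (h x)) hx
    simpa using this
  have hO : ∀ f h : G → Bool, 0 ≤ Lover (marg p) B hB f h := fun f h => hA h f
  have hZ : ∀ f h : G → Bool, (∀ x y, h x = h y → f x = f y) →
      Ladv (marg p) B hB f h = 0 := by
    intro f h hfh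
    refine le_antisymm ?_ (hA f h)
    unfold Ladv
    refine Finset.sum_nonpos fun x _ => mul_nonpos_of_nonneg_of_nonpos (hm x) ?_
    rw [Int.cast_nonpos]
    refine Finset.sup'_le _ _ fun y hy => ?_
    rw [hfh y x (Finset.mem_filter.mp hy).2]
    simp
  have h1 : Ladv (marg p) B hB (fun x => !(g x)) g = 0 :=
    hZ _ _ fun x y h => by simp [h]
  have h2 : Lover (marg p) B hB (fun x => !(g x)) g = 0 :=
    hZ g (fun x => !(g x)) fun x y h => by simpa using h
  have h0 : lam1 * Ladv (marg p) B hB (fun x => !(g x)) g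
        + lam2 * Lover (marg p) B hB (fun x => !(g x)) g = 0 := by
    rw [h1, h2]; ring
  refine ⟨h0, fun f' => ?_, ?_⟩
  · rw [h0]
    exact add_nonneg (mul_nonneg hlam1 (hA _ _)) (mul_nonneg hlam2 (hO _ _))
  · have hR : ∀ f : G → Bool, Risk p f = ∑ x, p (x, !(f x)) := by
      intro f
      unfold Risk
      rw [Fintype.sum_prod_type]
      refine Finset.sum_congr rfl fun x _ => ?_
      cases hfx : f x <;> simp [hfx]
    rw [hR, hR]
    simp only [Bool.not_not]
    obtain ⟨x0, hx0⟩ := hne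
    refine Finset.sum_lt_sum (fun x _ => ?_) ⟨x0, Finset.mem_univ _, hg x0 hx0⟩
    rcases (hm x).lt_or_eq with h | h
    · exact (hg x h).le
    · have ha := hp (x, false)
      have hb := hp (x, true)
      unfold marg at h
      cases g x <;> simp <;> linarith
end

section
/- Single-edge change potential for the CSBM log-likelihood ratio (core computation of Theorem 4): for every adjacency row a : Fin n → Bool and every index u : Fin n, letting a' = Function.update a u (¬(a u)), one has D(a') − D(a) = −c₀ if a u = decide (y u = y*) (i.e., the flip removes a same-class edge or adds a different-class edge), and D(a') − D(a) = c₀ otherwise; moreover c₀ > 0, so exactly the flips removing a same-class edge or adding a different-class edge strictly decrease D, and all of them decrease it by the same amount. -/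
/-- Edge probability between classes in a homophilic CSBM. -/
def w (p q : ℝ) (c c' : Bool) : ℝ := if c = c' then p else q

/-- Log-likelihood ratio of an adjacency row of the target node. -/
noncomputable def Dll (p q : ℝ) {n : ℕ} (y : Fin n → Bool) (ystar : Bool)
    (a : Fin n → Bool) : ℝ :=
  ∑ i : Fin n,
    (if a i then
        Real.log (w p q ystar (y i)) - Real.log (w p q (!ystar) (y i))
      else
        Real.log (1 - w p q ystar (y i)) - Real.log (1 - w p q (!ystar) (y i)))

/-- Single-edge change potential for the CSBM log-likelihood ratio: flipping
one entry of the adjacency row changes `D` by exactly `−c₀` when the flip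
removes a same-class edge or adds a different-class edge, and by `c₀`
otherwise, with `c₀ > 0`. -/
theorem csbm_single_flip_change
    (p q : ℝ) (hq : 0 < q) (hqp : q < p) (hp1 : p < 1)
    {n : ℕ} (y : Fin n → Bool) (ystar : Bool)
    (a : Fin n → Bool) (u : Fin n) :
    0 < Real.log p - Real.log q + Real.log (1 - q) - Real.log (1 - p) ∧
    (a u = decide (y u = ystar) →
      Dll p q y ystar (Function.update a u (!(a u))) - Dll p q y ystar a
        = -(Real.log p - Real.log q + Real.log (1 - q) - Real.log (1 - p))) ∧
    (a u ≠ decide (y u = ystar) →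
      Dll p q y ystar (Function.update a u (!(a u))) - Dll p q y ystar a
        = Real.log p - Real.log q + Real.log (1 - q) - Real.log (1 - p)) := by
  have h1 := Real.log_lt_log hq hqp
  have h2 : Real.log (1 - p) < Real.log (1 - q) :=
    Real.log_lt_log (by linarith) (by linarith)
  have key : Dll p q y ystar (Function.update a u (!(a u))) - Dll p q y ystar a
      = (if (!(a u)) then
          Real.log (w p q ystar (y u)) - Real.log (w p q (!ystar) (y u))
        else
          Real.log (1 - w p q ystar (y u)) - Real.log (1 - w p q (!ystar) (y u)))
        - (if a u then
          Real.log (w p q ystar (y u)) - Real.log (w p q (!ystar) (y u))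
        else
          Real.log (1 - w p q ystar (y u)) - Real.log (1 - w p q (!ystar) (y u))) := by
    unfold Dll
    rw [← Finset.sum_sub_distrib, Finset.sum_eq_single u]
    · rw [Function.update_self]
    · intro b _ hb
      rw [Function.update_of_ne hb, sub_self]
    · intro h
      exact absurd (Finset.mem_univ u) h
  refine ⟨by linarith, ?_, ?_⟩
  all_goals
    intro h
    rw [key]
    revert h
    cases a u <;> cases y u <;> cases ystar <;> simp [w] <;> ring
end

section
/- Theorem 4 (optimal attack on CSBMs, quantitative form): for any two adjacency rows a a' : Fin n → Bool, letting k be the number of indices i with a i ≠ a' i, one has D(a') ≥ D(a) − k·c₀, with equality if and only if every flipped index i (i.e., every i with a i ≠ a' i) satisfies a i = decide (y i = y*). Hence the log-likelihood ratio D is decreased fastest, per structure change, exactly by removing same-class edges or adding different-class edges to the target node. -/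
/-- Theorem 4 (optimal attack on CSBMs, quantitative form): perturbing the
adjacency row in `k` positions decreases the log-likelihood ratio `D` by at
most `k·c₀`, with equality iff every flipped position removes a same-class
edge or adds a different-class edge. -/
theorem csbm_optimal_attack
    (p q : ℝ) (hq : 0 < q) (hqp : q < p) (hp1 : p < 1)
    {n : ℕ} (y : Fin n → Bool) (ystar : Bool)
    (a a' : Fin n → Bool) :
    Dll p q y ystar a
        - ((Finset.univ.filter (fun i : Fin n => a i ≠ a' i)).card : ℝ)
          * (Real.log p - Real.log q + Real.log (1 - q) - Real.log (1 - p))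
      ≤ Dll p q y ystar a' ∧
    (Dll p q y ystar a'
        = Dll p q y ystar a
          - ((Finset.univ.filter (fun i : Fin n => a i ≠ a' i)).card : ℝ)
            * (Real.log p - Real.log q + Real.log (1 - q) - Real.log (1 - p)) ↔
      ∀ i : Fin n, a i ≠ a' i → a i = decide (y i = ystar)) := by
  have h1 : Real.log q < Real.log p := Real.log_lt_log hq hqp
  have h2 : Real.log (1 - p) < Real.log (1 - q) :=
    Real.log_lt_log (by linarith) (by linarith)
  let t : (Fin n → Bool) → Fin n → ℝ := fun b i =>
    if b i then
        Real.log (w p q ystar (y i)) - Real.log (w p q (!ystar) (y i))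
      else
        Real.log (1 - w p q ystar (y i)) - Real.log (1 - w p q (!ystar) (y i))
  let f : Fin n → ℝ := fun i => t a' i - t a i +
    (if a i ≠ a' i then
      (Real.log p - Real.log q + Real.log (1 - q) - Real.log (1 - p)) else 0)
  have hsum : ∑ i, f i = Dll p q y ystar a' - Dll p q y ystar a
      + ((Finset.univ.filter (fun i : Fin n => a i ≠ a' i)).card : ℝ)
          * (Real.log p - Real.log q + Real.log (1 - q) - Real.log (1 - p)) := by
    simp only [f, Finset.sum_add_distrib, Finset.sum_sub_distrib, ← Finset.sum_filter,
      Finset.sum_const, nsmul_eq_mul]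
    have e : ∀ b, Dll p q y ystar b = ∑ x, t b x := fun _ => rfl
    rw [e, e]
    ring
  have key : ∀ i, 0 ≤ f i ∧ (f i = 0 ↔ (a i ≠ a' i → a i = decide (y i = ystar))) := by
    intro i
    simp only [f, t, w]
    generalize a i = u
    generalize a' i = v
    generalize y i = z
    cases u <;> cases v <;> cases z <;> cases ystar <;> simp <;>
      first
      | (constructor <;> linarith)
      | linarith
      | (refine ⟨by linarith, fun h => by linarith⟩)
  have hz : ∑ i, f i = 0 ↔ ∀ i, f i = 0 := by
    rw [Finset.sum_eq_zero_iff_of_nonneg (fun i _ => (key i).1)]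
    simp
  have hn : 0 ≤ ∑ i, f i := Finset.sum_nonneg (fun i _ => (key i).1)
  constructor
  · linarith
  · rw [← forall_congr' (fun i => (key i).2), ← hz, hsum]
    constructor <;> intro h <;> linarith
end
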